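/- Suppose E is the unique element of W satisfying γ₀E = f and a(E, ψ) = ℓ(ψ) for all ψ ∈ M (i.e. any Ẽ ∈ W with γ₀Ẽ = f and a(Ẽ, ψ) = ℓ(ψ) for all ψ ∈ M equals E). Fix η > 0, and let (δ_n) and (ν_n) be sequences of positive reals with δ_n → 0 and δ_n/ν_n → 1. For each n let (E_n, F_n) be the unique solution of the RR-QR problem with parameters (δ_n, ν_n, η). Then E_n → E and F_n → 0 in the norm of W. (Abstract form of the convergence part of Theorem 4.2 under the parameter condition ν(δ) = δ + o(δ).) -/

import Mathlib

open ComplexConjugate Filter Topology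

local notation "⟪" x ", " y "⟫" => @inner ℂ _ _ x y

/-!
Write `e = u - E` for the error of an RR-QR solution `(u, F)`. Testing the first equation with
`e`, and using `a(e, ψ) = ⟨F, ψ⟩` to evaluate its last term, gives an energy identity which for
`ν = δ + o(δ)` reads `δ‖e‖² + η²‖γ₀e‖² + ‖F‖² ≤ δ (|⟨E, e⟩| + o(1) ‖e‖ ‖u‖)`. Dividing by `δ`
shows that `e` is bounded; hence the right-hand side is `O(δ)`, so `γ₀e → 0` and `F → 0`.
Consequently `a(e, ψ) → 0` for each `ψ ∈ M`, and uniqueness of the exact solution says that these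
functionals, together with `γ₀`, separate points: the bounded family `e` converges weakly to `0`.
Then `⟨E, e⟩ → 0`, and the same inequality yields `‖e‖² → 0`.
-/

section Convergence

open Asymptotics
open scoped InnerProductSpace

variable {𝕜 ι : Type*} [RCLike 𝕜]

theorem tendsto_zero_of_norm_sq_le {G : Type*} [SeminormedAddCommGroup G] {x : ι → G} {b : ι → ℝ}
    {l : Filter ι} (hx : ∀ n, ‖x n‖ ^ 2 ≤ b n) (hb : Tendsto b l (𝓝 0)) : Tendsto x l (𝓝 0) :=
  squeeze_zero_norm (fun n => Real.le_sqrt_of_sq_le (hx n)) (by simpa using hb.sqrt)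

section AsymptoticOrthogonal

variable {H : Type*} [NormedAddCommGroup H] [InnerProductSpace 𝕜 H] {e : ι → H}
  {l : Filter ι}

variable (𝕜 e l) in
/-- The vectors to which `e` becomes orthogonal in the limit along `l`. The family `e` tends to
zero weakly exactly when this subspace is everything. -/
def asymptoticOrthogonal : Submodule 𝕜 H where
  carrier := {v | Tendsto (fun n => ⟪v, e n⟫_𝕜) l (𝓝 0)}
  zero_mem' := by simpa only [Set.mem_ofPred_eq, inner_zero_left] using tendsto_const_nhds
  add_mem' hv hw := by
    simpa only [Set.mem_ofPred_eq, inner_add_left, add_zero] using hv.add hw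
  smul_mem' k v hv := by
    simpa only [Set.mem_ofPred_eq, inner_smul_left, mul_zero] using hv.const_mul (conj k)

theorem mem_asymptoticOrthogonal {v : H} :
    v ∈ asymptoticOrthogonal 𝕜 e l ↔ Tendsto (fun n => ⟪v, e n⟫_𝕜) l (𝓝 0) :=
  Iff.rfl

theorem isClosed_asymptoticOrthogonal (he : e =O[l] (1 : ι → ℝ)) :
    IsClosed (asymptoticOrthogonal 𝕜 e l : Set H) := by
  obtain ⟨C, hC, hbound⟩ := he.exists_pos
  refine isClosed_of_closure_subset fun v hv => Metric.tendsto_nhds.2 fun ε hε => ?_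
  obtain ⟨w, hw, hvw⟩ := Metric.mem_closure_iff.1 hv (ε / 2 / C) (by positivity)
  filter_upwards [hbound.bound, Metric.tendsto_nhds.1 hw (ε / 2) (by positivity)] with n hn hwn
  have hnear : ‖⟪v - w, e n⟫_𝕜‖ ≤ ε / 2 := calc
    ‖⟪v - w, e n⟫_𝕜‖ ≤ ‖v - w‖ * ‖e n‖ := norm_inner_le_norm _ _
    _ ≤ ε / 2 / C * C := by
      gcongr
      · exact dist_eq_norm v w ▸ hvw.le
      · simpa using hn
    _ = ε / 2 := div_mul_cancel₀ _ hC.ne'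
  rw [dist_zero_right] at hwn ⊢
  calc ‖⟪v, e n⟫_𝕜‖ = ‖⟪v - w, e n⟫_𝕜 + ⟪w, e n⟫_𝕜‖ := by rw [← inner_add_left, sub_add_cancel]
    _ ≤ ‖⟪v - w, e n⟫_𝕜‖ + ‖⟪w, e n⟫_𝕜‖ := norm_add_le _ _
    _ < ε := by linarith

variable [CompleteSpace H]

theorem asymptoticOrthogonal_eq_top (he : e =O[l] (1 : ι → ℝ))
    (h : (asymptoticOrthogonal 𝕜 e l)ᗮ = ⊥) : asymptoticOrthogonal 𝕜 e l = ⊤ := by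
  rw [← (isClosed_asymptoticOrthogonal he).submodule_topologicalClosure_eq]
  exact Submodule.topologicalClosure_eq_top_iff.2 h

theorem map_eq_zero_of_mem_asymptoticOrthogonal_orthogonal {G : Type*} [NormedAddCommGroup G]
    [NormedSpace 𝕜 G] (A : H →L[𝕜] G) (hA : Tendsto (fun n => A (e n)) l (𝓝 0)) {x : H}
    (hx : x ∈ (asymptoticOrthogonal 𝕜 e l)ᗮ) : A x = 0 := by
  refine SeparatingDual.eq_zero_of_forall_dual_eq_zero (R := 𝕜) fun T => ?_
  set v : H := (InnerProductSpace.toDual 𝕜 H).symm (T ∘L A)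
  have hv : ∀ y, ⟪v, y⟫_𝕜 = T (A y) := fun y => InnerProductSpace.toDual_symm_apply
  have hmem : v ∈ asymptoticOrthogonal 𝕜 e l := by
    simpa only [mem_asymptoticOrthogonal, hv, map_zero, Function.comp_def]
      using (T.continuous.tendsto 0).comp hA
  exact hv x ▸ Submodule.inner_right_of_mem_orthogonal hmem hx

end AsymptoticOrthogonal

section ErrorMajorant

variable {H : Type*} [NormedAddCommGroup H] [InnerProductSpace 𝕜 H]
  {E : H}

variable (𝕜) in
/-- The quantity which bounds the squared error `‖v - E‖²` of an approximation `v` of `E`; the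
parameter `c` measures the relative mismatch of the two regularization parameters. -/
noncomputable def errorMajorant (E : H) (c : ℝ) (v : H) : ℝ :=
  ‖⟪E, v - E⟫_𝕜‖ + c * (‖v - E‖ * ‖v‖)

theorem norm_sub_le_of_sq_le_errorMajorant {v : H} {c : ℝ} (hc : c ≤ 1 / 2)
    (h : ‖v - E‖ ^ 2 ≤ errorMajorant 𝕜 E c v) : ‖v - E‖ ≤ 3 * ‖E‖ := by
  have hinner : ‖⟪E, v - E⟫_𝕜‖ ≤ ‖E‖ * ‖v - E‖ := norm_inner_le_norm _ _
  have hv : ‖v‖ ≤ ‖v - E‖ + ‖E‖ := norm_le_norm_sub_add v E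
  have hmul : c * (‖v - E‖ * ‖v‖) ≤ 1 / 2 * (‖v - E‖ * (‖v - E‖ + ‖E‖)) := by gcongr
  unfold errorMajorant at h
  by_contra! hlt
  have hpos : 0 < ‖v - E‖ := (by positivity : 0 ≤ 3 * ‖E‖).trans_lt hlt
  nlinarith

variable {u : ι → H} {c : ι → ℝ} {l : Filter ι}

theorem isBigO_one_of_sq_le_errorMajorant (hc : Tendsto c l (𝓝 0))
    (h : ∀ n, ‖u n - E‖ ^ 2 ≤ errorMajorant 𝕜 E (c n) (u n)) :
    (fun n => u n - E) =O[l] (1 : ι → ℝ) := by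
  refine IsBigO.of_bound (3 * ‖E‖) ?_
  filter_upwards [hc.eventually_le_const one_half_pos] with n hn
  simpa using norm_sub_le_of_sq_le_errorMajorant hn (h n)

theorem tendsto_mul_norm_sub_mul_norm (hc : Tendsto c l (𝓝 0))
    (hu : (fun n => u n - E) =O[l] (1 : ι → ℝ)) :
    Tendsto (fun n => c n * (‖u n - E‖ * ‖u n‖)) l (𝓝 0) := by
  have hu' : u =O[l] (1 : ι → ℝ) := by
    simpa using hu.add (isBigO_const_const E one_ne_zero l)
  simpa using ((isLittleO_one_iff ℝ).2 hc).mul_isBigO (hu.norm_left.mul hu'.norm_left)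

theorem isBigO_one_errorMajorant (hc : Tendsto c l (𝓝 0))
    (hu : (fun n => u n - E) =O[l] (1 : ι → ℝ)) :
    (fun n => errorMajorant 𝕜 E (c n) (u n)) =O[l] (1 : ι → ℝ) := by
  have hinner : (fun n => ‖⟪E, u n - E⟫_𝕜‖) =O[l] (1 : ι → ℝ) :=
    ((innerSL 𝕜 E).isBigO_comp _ l).norm_left.trans hu
  exact hinner.add ((tendsto_mul_norm_sub_mul_norm hc hu).isBigO_one ℝ)

theorem tendsto_errorMajorant_zero (hc : Tendsto c l (𝓝 0))
    (hu : (fun n => u n - E) =O[l] (1 : ι → ℝ))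
    (hE : E ∈ asymptoticOrthogonal 𝕜 (fun n => u n - E) l) :
    Tendsto (fun n => errorMajorant 𝕜 E (c n) (u n)) l (𝓝 0) := by
  simpa [errorMajorant] using
    (mem_asymptoticOrthogonal.1 hE).norm.add (tendsto_mul_norm_sub_mul_norm hc hu)

end ErrorMajorant

section RRQR

variable {W L₀ L₁ : Type*} [NormedAddCommGroup W] [InnerProductSpace 𝕜 W]
  [NormedAddCommGroup L₀] [InnerProductSpace 𝕜 L₀] [NormedAddCommGroup L₁] [InnerProductSpace 𝕜 L₁]
  {γ₀ : W →L[𝕜] L₀} {γ₁ : W →L[𝕜] L₁} {p : W → W → 𝕜} {M : Set W} {a : W → W → 𝕜} {f : L₀}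
  {ℓ : W → 𝕜} {E : W} {l : Filter ι}

/-- `E` solves the unregularized problem: it has trace `f` and satisfies the variational equation
against the test vectors `M`. -/
structure IsExactSolution (γ₀ : W →L[𝕜] L₀) (M : Set W) (a : W → W → 𝕜) (f : L₀) (ℓ : W → 𝕜)
    (E : W) : Prop where
  trace_eq : γ₀ E = f
  apply_eq : ∀ ψ ∈ M, a E ψ = ℓ ψ

/-- `(u, F)` solves the relaxed regularized QR problem with parameters `(δ, ν, η)`. The forms `p`
and `a` are linear in the first argument, while `⟪x, y⟫_𝕜` is linear in `y`. -/
structure IsRRQRSolution (γ₀ : W →L[𝕜] L₀) (γ₁ : W →L[𝕜] L₁) (p : W → W → 𝕜) (M : Set W)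
    (a : W → W → 𝕜) (f : L₀) (ℓ : W → 𝕜) (δ ν η : ℝ) (u F : W) : Prop where
  mem : F ∈ M
  test_primal : ∀ φ, (δ : 𝕜) * p u φ + (ν : 𝕜) * ⟪γ₁ φ, γ₁ u⟫_𝕜 +
    (η : 𝕜) ^ 2 * ⟪γ₀ φ, γ₀ u - f⟫_𝕜 + conj (a φ F) = 0
  test_dual : ∀ ψ ∈ M, a u ψ - ⟪ψ, F⟫_𝕜 = ℓ ψ

theorem IsExactSolution.eq_zero_of_homogeneous (hE : IsExactSolution γ₀ M a f ℓ E)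
    (hunique : ∀ E', IsExactSolution γ₀ M a f ℓ E' → E' = E)
    (ha : ∀ ψ ∈ M, IsLinearMap 𝕜 (a · ψ)) {x : W} (hγ₀ : γ₀ x = 0) (hx : ∀ ψ ∈ M, a x ψ = 0) :
    x = 0 := by
  refine add_eq_right.1 (hunique (x + E) ⟨?_, fun ψ hψ => ?_⟩)
  · rw [map_add, hγ₀, zero_add, hE.trace_eq]
  · rw [(ha ψ hψ).map_add, hx ψ hψ, zero_add, hE.apply_eq ψ hψ]

namespace IsRRQRSolution

variable {δ ν η : ℝ} {u F : W}

theorem apply_error (h : IsRRQRSolution γ₀ γ₁ p M a f ℓ δ ν η u F)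
    (hE : IsExactSolution γ₀ M a f ℓ E) (ha : ∀ ψ ∈ M, IsLinearMap 𝕜 (a · ψ)) {ψ : W}
    (hψ : ψ ∈ M) : a (u - E) ψ = ⟪ψ, F⟫_𝕜 := by
  rw [(ha ψ hψ).map_sub, hE.apply_eq ψ hψ, ← h.test_dual ψ hψ, sub_sub_cancel]

theorem energy_identity (h : IsRRQRSolution γ₀ γ₁ p M a f ℓ δ ν η u F)
    (hE : IsExactSolution γ₀ M a f ℓ E) (ha : ∀ ψ ∈ M, IsLinearMap 𝕜 (a · ψ))
    (hp : ∀ x y, ⟪y, x⟫_𝕜 = p x y + ⟪γ₁ y, γ₁ x⟫_𝕜) :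
    δ * RCLike.re ⟪u - E, u⟫_𝕜 + (ν - δ) * RCLike.re ⟪γ₁ (u - E), γ₁ u⟫_𝕜 +
      η ^ 2 * ‖γ₀ (u - E)‖ ^ 2 + ‖F‖ ^ 2 = 0 := by
  have htest := congrArg RCLike.re (h.test_primal (u - E))
  rw [eq_sub_of_add_eq (hp u (u - E)).symm, ← hE.trace_eq, ← map_sub, h.apply_error hE ha h.mem,
    inner_conj_symm, ← RCLike.ofReal_pow] at htest
  simp only [map_add, RCLike.re_ofReal_mul, inner_self_eq_norm_sq, map_zero] at htest
  rw [map_sub] at htest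
  linarith

theorem energy_le (h : IsRRQRSolution γ₀ γ₁ p M a f ℓ δ ν η u F)
    (hE : IsExactSolution γ₀ M a f ℓ E) (ha : ∀ ψ ∈ M, IsLinearMap 𝕜 (a · ψ))
    (hp : ∀ x y, ⟪y, x⟫_𝕜 = p x y + ⟪γ₁ y, γ₁ x⟫_𝕜) (hδ : 0 < δ) :
    δ * ‖u - E‖ ^ 2 + η ^ 2 * ‖γ₀ (u - E)‖ ^ 2 + ‖F‖ ^ 2 ≤
      δ * errorMajorant 𝕜 E (|ν / δ - 1| * ‖γ₁‖ ^ 2) u := by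
  have hsplit : RCLike.re ⟪u - E, u⟫_𝕜 = ‖u - E‖ ^ 2 + RCLike.re ⟪E, u - E⟫_𝕜 := by
    rw [← inner_self_eq_norm_sq (𝕜 := 𝕜), inner_re_symm E, ← map_add, ← inner_add_right,
      sub_add_cancel]
  have hE_le : -(δ * RCLike.re ⟪E, u - E⟫_𝕜) ≤ δ * ‖⟪E, u - E⟫_𝕜‖ := by
    rw [← mul_neg]
    exact mul_le_mul_of_nonneg_left ((neg_le_abs _).trans (RCLike.abs_re_le_norm _)) hδ.le
  have hmismatch : |ν - δ| = δ * |ν / δ - 1| := by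
    rw [show ν - δ = δ * (ν / δ - 1) by field_simp, abs_mul, abs_of_pos hδ]
  have hγ₁_le : -((ν - δ) * RCLike.re ⟪γ₁ (u - E), γ₁ u⟫_𝕜) ≤
      δ * (|ν / δ - 1| * ‖γ₁‖ ^ 2 * (‖u - E‖ * ‖u‖)) := calc
    _ ≤ |ν - δ| * |RCLike.re ⟪γ₁ (u - E), γ₁ u⟫_𝕜| := abs_mul (ν - δ) _ ▸ neg_le_abs _
    _ ≤ |ν - δ| * (‖γ₁ (u - E)‖ * ‖γ₁ u‖) := by
      gcongr
      exact (RCLike.abs_re_le_norm _).trans (norm_inner_le_norm _ _)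
    _ ≤ |ν - δ| * (‖γ₁‖ * ‖u - E‖ * (‖γ₁‖ * ‖u‖)) := by
      gcongr <;> exact γ₁.le_opNorm _
    _ = δ * (|ν / δ - 1| * ‖γ₁‖ ^ 2 * (‖u - E‖ * ‖u‖)) := by rw [hmismatch]; ring
  have henergy := h.energy_identity hE ha hp
  rw [hsplit] at henergy
  rw [errorMajorant, mul_add]
  linarith

end IsRRQRSolution

theorem tendsto_mismatch_zero {δ ν : ι → ℝ} (hδ : ∀ n, δ n ≠ 0) (hν : ν ~[l] δ) (C : ℝ) :
    Tendsto (fun n => |ν n / δ n - 1| * C) l (𝓝 0) := by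
  have hratio := (isEquivalent_iff_tendsto_one (Eventually.of_forall hδ)).1 hν
  simpa using ((hratio.sub_const 1).abs).mul_const C

section Residuals

variable {δ b : ι → ℝ} {η : ℝ} {u F : ι → W}

theorem norm_sub_sq_le_of_energy_le (hδ : ∀ n, 0 < δ n)
    (henergy : ∀ n, δ n * ‖u n - E‖ ^ 2 + η ^ 2 * ‖γ₀ (u n - E)‖ ^ 2 + ‖F n‖ ^ 2 ≤ δ n * b n)
    (n : ι) : ‖u n - E‖ ^ 2 ≤ b n := by
  refine le_of_mul_le_mul_left ?_ (hδ n)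
  linarith [henergy n, sq_nonneg ‖F n‖, (by positivity : 0 ≤ η ^ 2 * ‖γ₀ (u n - E)‖ ^ 2)]

theorem tendsto_residuals_zero_of_energy_le (hη : η ≠ 0) (hδ : ∀ n, 0 < δ n)
    (hδ_lim : Tendsto δ l (𝓝 0)) (hb : b =O[l] (1 : ι → ℝ))
    (henergy : ∀ n, δ n * ‖u n - E‖ ^ 2 + η ^ 2 * ‖γ₀ (u n - E)‖ ^ 2 + ‖F n‖ ^ 2 ≤ δ n * b n) :
    Tendsto (fun n => γ₀ (u n - E)) l (𝓝 0) ∧ Tendsto F l (𝓝 0) := by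
  have hδb : Tendsto (fun n => δ n * b n) l (𝓝 0) := by
    simpa using ((isLittleO_one_iff ℝ).2 hδ_lim).mul_isBigO hb
  have herror : ∀ n, 0 ≤ δ n * ‖u n - E‖ ^ 2 := fun n => mul_nonneg (hδ n).le (sq_nonneg _)
  constructor
  · refine tendsto_zero_of_norm_sq_le (b := fun n => δ n * b n / η ^ 2) (fun n => ?_)
      (by simpa using hδb.div_const (η ^ 2))
    rw [le_div_iff₀' (by positivity)]
    linarith [henergy n, herror n, sq_nonneg ‖F n‖]
  · refine tendsto_zero_of_norm_sq_le (fun n => ?_) hδb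
    linarith [henergy n, herror n, (by positivity : 0 ≤ η ^ 2 * ‖γ₀ (u n - E)‖ ^ 2)]

end Residuals

variable [CompleteSpace W]

theorem asymptoticOrthogonal_error_eq_top {δ ν : ι → ℝ} {η : ℝ} {u F : ι → W}
    (ha : ∀ ψ ∈ M, IsBoundedLinearMap 𝕜 (a · ψ)) (hE : IsExactSolution γ₀ M a f ℓ E)
    (hunique : ∀ E', IsExactSolution γ₀ M a f ℓ E' → E' = E)
    (hsol : ∀ n, IsRRQRSolution γ₀ γ₁ p M a f ℓ (δ n) (ν n) η (u n) (F n))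
    (hu : (fun n => u n - E) =O[l] (1 : ι → ℝ))
    (hγ₀ : Tendsto (fun n => γ₀ (u n - E)) l (𝓝 0)) (hF : Tendsto F l (𝓝 0)) :
    asymptoticOrthogonal 𝕜 (fun n => u n - E) l = ⊤ := by
  have ha' : ∀ ψ ∈ M, IsLinearMap 𝕜 (a · ψ) := fun ψ hψ => (ha ψ hψ).toIsLinearMap
  refine asymptoticOrthogonal_eq_top hu ((Submodule.eq_bot_iff _).2 fun x hx => ?_)
  refine hE.eq_zero_of_homogeneous hunique ha'
    (map_eq_zero_of_mem_asymptoticOrthogonal_orthogonal γ₀ hγ₀ hx) fun ψ hψ => ?_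
  have haψ : Tendsto (fun n => a (u n - E) ψ) l (𝓝 0) := by
    simp only [(hsol _).apply_error hE ha' hψ]
    simpa using (tendsto_const_nhds (x := ψ)).inner (𝕜 := 𝕜) hF
  exact map_eq_zero_of_mem_asymptoticOrthogonal_orthogonal (ha ψ hψ).toContinuousLinearMap haψ hx

theorem rrqr_convergence_general {δ ν : ι → ℝ} {η : ℝ} {u F : ι → W}
    (hp : ∀ x y, ⟪y, x⟫_𝕜 = p x y + ⟪γ₁ y, γ₁ x⟫_𝕜)
    (ha : ∀ ψ ∈ M, IsBoundedLinearMap 𝕜 (a · ψ)) (hE : IsExactSolution γ₀ M a f ℓ E)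
    (hunique : ∀ E', IsExactSolution γ₀ M a f ℓ E' → E' = E)
    (hη : η ≠ 0) (hδ : ∀ n, 0 < δ n) (hδ_lim : Tendsto δ l (𝓝 0)) (hν : ν ~[l] δ)
    (hsol : ∀ n, IsRRQRSolution γ₀ γ₁ p M a f ℓ (δ n) (ν n) η (u n) (F n)) :
    Tendsto u l (𝓝 E) ∧ Tendsto F l (𝓝 0) := by
  have henergy := fun n =>
    (hsol n).energy_le hE (fun ψ hψ => (ha ψ hψ).toIsLinearMap) hp (hδ n)
  have hc := tendsto_mismatch_zero (fun n => (hδ n).ne') hν (‖γ₁‖ ^ 2)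
  have herror := norm_sub_sq_le_of_energy_le hδ henergy
  have hu := isBigO_one_of_sq_le_errorMajorant hc herror
  obtain ⟨hγ₀, hF⟩ := tendsto_residuals_zero_of_energy_le hη hδ hδ_lim
    (isBigO_one_errorMajorant hc hu) henergy
  have hweak := asymptoticOrthogonal_error_eq_top ha hE hunique hsol hu hγ₀ hF
  have hmajorant := tendsto_errorMajorant_zero hc hu (hweak ▸ Submodule.mem_top)
  exact ⟨tendsto_sub_nhds_zero_iff.1 (tendsto_zero_of_norm_sq_le herror hmajorant), hF⟩

end RRQR

theorem isBoundedLinearMap_left_of_le {W : Type*} [SeminormedAddCommGroup W] [NormedSpace 𝕜 W]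
    {a : W → W → 𝕜} {ψ : W} {C : ℝ}
    (ha_lin : ∀ (c : 𝕜) (u u' : W), a (c • u + u') ψ = c * a u ψ + a u' ψ)
    (ha_bdd : ∀ u, ‖a u ψ‖ ≤ C * ‖u‖ * ‖ψ‖) : IsBoundedLinearMap 𝕜 (a · ψ) := by
  have hzero : a 0 ψ = 0 := by simpa using ha_lin 1 0 0
  refine IsLinearMap.with_bound ⟨fun u u' => ?_, fun c u => ?_⟩ (C * ‖ψ‖) fun u => ?_
  · simpa using ha_lin 1 u u'
  · simpa [hzero] using ha_lin c u 0
  · simpa only [mul_right_comm] using ha_bdd u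

end Convergence

/-- convergence of the RR-QR method under the parameter condition
`ν(δ) = δ + o(δ)`. If `E` is the unique element of `W` with `γ₀E = f` and
`a(E,ψ) = ℓ(ψ)` for all `ψ ∈ M`, `η > 0` is fixed, `δₙ, νₙ > 0`, `δₙ → 0`,
`δₙ/νₙ → 1`, and `(Eₙ, Fₙ)` solves the RR-QR problem with parameters `(δₙ, νₙ, η)`,
then `Eₙ → E` and `Fₙ → 0` in the norm of `W`. -/
theorem rrqr_convergence
    {W L₀ L₁ : Type*} [NormedAddCommGroup W] [InnerProductSpace ℂ W] [CompleteSpace W]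
    [NormedAddCommGroup L₀] [InnerProductSpace ℂ L₀] [CompleteSpace L₀]
    [NormedAddCommGroup L₁] [InnerProductSpace ℂ L₁] [CompleteSpace L₁]
    (γ₀ : W →L[ℂ] L₀) (γ₁ : W →L[ℂ] L₁)
    (p : W → W → ℂ)
    (hp_lin : ∀ (c : ℂ) (u u' v : W), p (c • u + u') v = c * p u v + p u' v)
    (hp_herm : ∀ u v : W, p v u = conj (p u v))
    (hp_pos : ∀ u : W, 0 ≤ (p u u).re)
    (hp_bdd : ∃ C : ℝ, ∀ u v : W, ‖p u v‖ ≤ C * ‖u‖ * ‖v‖)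
    (hp_compat : ∀ u v : W, (⟪v, u⟫ : ℂ) = p u v + ⟪γ₁ v, γ₁ u⟫)
    (M : Submodule ℂ W) (hM : IsClosed (M : Set W))
    (a : W → W → ℂ)
    (ha_lin : ∀ (c : ℂ) (u u' v : W), v ∈ M → a (c • u + u') v = c * a u v + a u' v)
    (ha_conj : ∀ (c : ℂ) (u v v' : W), v ∈ M → v' ∈ M →
      a u (c • v + v') = conj c * a u v + a u v')
    (ha_bdd : ∃ C : ℝ, ∀ (u v : W), v ∈ M → ‖a u v‖ ≤ C * ‖u‖ * ‖v‖)
    (f : L₀)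
    (ℓ : W → ℂ)
    (hℓ_conj : ∀ (c : ℂ) (v w : W), v ∈ M → w ∈ M → ℓ (c • v + w) = conj c * ℓ v + ℓ w)
    (hℓ_bdd : ∃ C : ℝ, ∀ v ∈ M, ‖ℓ v‖ ≤ C * ‖v‖)
    (E : W) (hE_trace : γ₀ E = f) (hE_eq : ∀ ψ ∈ M, a E ψ = ℓ ψ)
    (hE_unique : ∀ E' : W, γ₀ E' = f → (∀ ψ ∈ M, a E' ψ = ℓ ψ) → E' = E)
    (η : ℝ) (hη : 0 < η)
    (δn νn : ℕ → ℝ) (hδn_pos : ∀ n, 0 < δn n) (hνn_pos : ∀ n, 0 < νn n)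
    (hδn_lim : Tendsto δn atTop (𝓝 0))
    (hratio : Tendsto (fun n => δn n / νn n) atTop (𝓝 1))
    (sol : ℕ → W × W)
    (hsol : ∀ n : ℕ,
      (sol n).2 ∈ M ∧
      (∀ φ : W, (δn n : ℂ) * p (sol n).1 φ + (νn n : ℂ) * ⟪γ₁ φ, γ₁ (sol n).1⟫ +
        (η : ℂ) ^ 2 * ⟪γ₀ φ, γ₀ (sol n).1 - f⟫ + conj (a φ (sol n).2) = 0) ∧
      (∀ ψ ∈ M, a (sol n).1 ψ - ⟪ψ, (sol n).2⟫ = ℓ ψ)) :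
    Tendsto (fun n => (sol n).1) atTop (𝓝 E) ∧
    Tendsto (fun n => (sol n).2) atTop (𝓝 (0 : W)) := by
  obtain ⟨C, hC⟩ := ha_bdd
  exact rrqr_convergence_general hp_compat
    (fun ψ hψ => isBoundedLinearMap_left_of_le (ha_lin · · · ψ hψ) (hC · ψ hψ))
    ⟨hE_trace, hE_eq⟩ (fun E' h => hE_unique E' h.trace_eq h.apply_eq) hη.ne' hδn_pos hδn_lim
    (Asymptotics.isEquivalent_of_tendsto_one hratio).symm
    fun n => ⟨(hsol n).1, (hsol n).2.1, (hsol n).2.2⟩
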